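/- arXiv:2210.04487 — 2 statements merged into one kernel-verified Lean document; each statement's English description precedes it below -/
import Mathlib

section
/- Let F₄ = GF(4), let n be odd, let g₁, g₂ be monic divisors of Xⁿ−1 in F₄[X], and let ν ∈ F₄[X] with ν−1 coprime to Xⁿ−1. Let C ⊆ F₄^{2n} be the F₄-span of all vectors ([a·ν·g₁]ₙ, [a·g₁]ₙ) and ([b·g₂]ₙ, [b·ν·g₂]ₙ) for a, b ∈ F₄[X], and let D ⊆ F₄^{2n} be the F₄-span of all vectors ([−ν̄·c·g₁^{⊥h}]ₙ, [c·g₁^{⊥h}]ₙ) and ([s·g₂^{⊥h}]ₙ, [−ν̄·s·g₂^{⊥h}]ₙ) for c, s ∈ F₄[X]. Then D = C^{⊥h}; in particular the F₄-dimension of D equals deg g₁ + deg g₂. -/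
open Polynomial

set_option synthInstance.maxHeartbeats 1000000
set_option maxHeartbeats 1000000

noncomputable section

/-- The field `F₄ = GF(4)`. -/
abbrev F4 : Type := GaloisField 2 2

/-- The coefficient vector `[p]ₙ ∈ F₄ⁿ` of the remainder of `p` modulo `Xⁿ - 1`
(coefficient of `X^i` in position `i`). -/
def coeffVec (n : ℕ) (p : Polynomial F4) : Fin n → F4 :=
  fun i => (p % (X ^ n - 1)).coeff i

/-- The Hermitian inner product `⟨u,v⟩_h = ∑ i, u i * (v i)²` on `F₄^m`. -/
def hermInner {m : ℕ} (u v : Fin m → F4) : F4 := ∑ i, u i * (v i) ^ 2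

/-- The Hermitian inner product on `F₄ⁿ × F₄ⁿ`: the sum of the Hermitian inner
products of the two components. -/
def hermInner2 {n : ℕ} (u v : (Fin n → F4) × (Fin n → F4)) : F4 :=
  hermInner u.1 v.1 + hermInner u.2 v.2

/-- The conjugate transform `f̄ := f₀² + ∑_{i=1}^{n-1} f_i² X^{n-i}`, where `f` is first
reduced modulo `Xⁿ - 1`. -/
def conjT (n : ℕ) (f : Polynomial F4) : Polynomial F4 :=
  C (((f % (X ^ n - 1)).coeff 0) ^ 2) +
    ∑ i ∈ Finset.Ico 1 n, C (((f % (X ^ n - 1)).coeff i) ^ 2) * X ^ (n - i)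

/-- The Hermitian dual generator `g^{⊥h}(X) := ∑_{j=0}^{deg h} (h_j)² X^{deg h - j}`,
the conjugate reciprocal of the check polynomial `h = (Xⁿ-1)/g`. -/
def dualGen (n : ℕ) (g : Polynomial F4) : Polynomial F4 :=
  ∑ j ∈ Finset.range (((X ^ n - 1) / g).natDegree + 1),
    C ((((X ^ n - 1) / g).coeff j) ^ 2) * X ^ (((X ^ n - 1) / g).natDegree - j)

lemma hermInner_add_right {m : ℕ} (u v w : Fin m → F4) :
    hermInner u (v + w) = hermInner u v + hermInner u w := by
  simp only [hermInner, Pi.add_apply]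
  rw [← Finset.sum_add_distrib]
  refine Finset.sum_congr rfl fun i _ => ?_
  rw [add_pow_char (v i) (w i) 2, mul_add]

lemma hermInner_smul_right {m : ℕ} (c : F4) (u v : Fin m → F4) :
    hermInner u (c • v) = c ^ 2 * hermInner u v := by
  simp only [hermInner, Pi.smul_apply, smul_eq_mul, mul_pow, Finset.mul_sum]
  exact Finset.sum_congr rfl fun i _ => by ring

/-- The Hermitian dual code `C^{⊥h} = {v | ∀ u ∈ C, ⟨u,v⟩_h = 0}` of a linear code in `F₄^m`. -/
def hermDual {m : ℕ} (Ccode : Submodule F4 (Fin m → F4)) : Submodule F4 (Fin m → F4) where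
  carrier := {v | ∀ u ∈ Ccode, hermInner u v = 0}
  zero_mem' := by intro u _; simp [hermInner]
  add_mem' := by
    intro v w hv hw u hu
    rw [hermInner_add_right, hv u hu, hw u hu, add_zero]
  smul_mem' := by
    intro c v hv u hu
    rw [hermInner_smul_right, hv u hu, mul_zero]

lemma hermInner2_add_right {n : ℕ} (u v w : (Fin n → F4) × (Fin n → F4)) :
    hermInner2 u (v + w) = hermInner2 u v + hermInner2 u w := by
  simp only [hermInner2, Prod.fst_add, Prod.snd_add, hermInner_add_right]
  ring

lemma hermInner2_smul_right {n : ℕ} (c : F4) (u v : (Fin n → F4) × (Fin n → F4)) :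
    hermInner2 u (c • v) = c ^ 2 * hermInner2 u v := by
  simp only [hermInner2, Prod.smul_fst, Prod.smul_snd, hermInner_smul_right]
  ring

/-- The Hermitian dual code of a linear code in `F₄ⁿ × F₄ⁿ` (identified with `F₄^{2n}`). -/
def hermDualPair {n : ℕ} (Ccode : Submodule F4 ((Fin n → F4) × (Fin n → F4))) :
    Submodule F4 ((Fin n → F4) × (Fin n → F4)) where
  carrier := {v | ∀ u ∈ Ccode, hermInner2 u v = 0}
  zero_mem' := by intro u _; simp [hermInner2, hermInner]
  add_mem' := by
    intro v w hv hw u hu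
    rw [hermInner2_add_right, hv u hu, hw u hu, add_zero]
  smul_mem' := by
    intro c v hv u hu
    rw [hermInner2_smul_right, hv u hu, mul_zero]

/-- Hamming weight of a vector. -/
def hammingWt {m : ℕ} (u : Fin m → F4) : ℕ := Nat.card {i : Fin m // u i ≠ 0}

/-- The 2-generator quasi-cyclic code `C(g₁,g₂,ν)` of length `2n` and index 2:
the `F₄`-span of all `([a·ν·g₁]ₙ, [a·g₁]ₙ)` and `([b·g₂]ₙ, [b·ν·g₂]ₙ)`. -/
def Cqc (n : ℕ) (g₁ g₂ ν : Polynomial F4) : Submodule F4 ((Fin n → F4) × (Fin n → F4)) :=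
  Submodule.span F4
    ({x | ∃ a : Polynomial F4, x = (coeffVec n (a * ν * g₁), coeffVec n (a * g₁))} ∪
     {x | ∃ b : Polynomial F4, x = (coeffVec n (b * g₂), coeffVec n (b * ν * g₂))})

/-- The quasi-cyclic code `D`: the `F₄`-span of all `([-ν̄·c·g₁^{⊥h}]ₙ, [c·g₁^{⊥h}]ₙ)`
and `([s·g₂^{⊥h}]ₙ, [-ν̄·s·g₂^{⊥h}]ₙ)`. -/
def Dqc (n : ℕ) (g₁ g₂ ν : Polynomial F4) : Submodule F4 ((Fin n → F4) × (Fin n → F4)) :=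
  Submodule.span F4
    ({x | ∃ c : Polynomial F4,
        x = (coeffVec n (-(conjT n ν) * c * dualGen n g₁), coeffVec n (c * dualGen n g₁))} ∪
     {x | ∃ s : Polynomial F4,
        x = (coeffVec n (s * dualGen n g₂), coeffVec n (-(conjT n ν) * s * dualGen n g₂))})

/-- The quotient ring `R = F₄[X]/(Xⁿ - 1)`. -/
abbrev Rng (n : ℕ) : Type := Polynomial F4 ⧸ Ideal.span ({X ^ n - 1} : Set (Polynomial F4))

/-- The natural projection `F₄[X] → R`. -/
def toRng (n : ℕ) : Polynomial F4 →+* Rng n := Ideal.Quotient.mk _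

/-- The `R`-linear map `R → R × R`, `a ↦ (a·û, a·v̂)`, where `û, v̂` are the images of
`u, v` in `R`. -/
def qcMap (n : ℕ) (u v : Polynomial F4) : Rng n →ₗ[Rng n] Rng n × Rng n :=
  (LinearMap.toSpanSingleton (Rng n) (Rng n) (toRng n u)).prod
    (LinearMap.toSpanSingleton (Rng n) (Rng n) (toRng n v))

lemma F4_pow4 (a : F4) : (a ^ 2) ^ 2 = a := by
  have : Fintype F4 := Fintype.ofFinite _
  have h := FiniteField.pow_card a
  have hc := GaloisField.card 2 2 (by norm_num)
  rw [Nat.card_eq_fintype_card] at hc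
  rw [hc] at h
  rw [← pow_mul]; exact h

lemma M_monic {n : ℕ} (hn : 0 < n) : (X ^ n - 1 : F4[X]).Monic := by
  simpa using monic_X_pow_sub_C (1 : F4) hn.ne'

lemma M_natDegree {n : ℕ} : (X ^ n - 1 : F4[X]).natDegree = n := by
  simpa using natDegree_X_pow_sub_C (n := n) (r := (1 : F4))

lemma toRng_eq_iff {n : ℕ} (p q : F4[X]) : toRng n p = toRng n q ↔ (X ^ n - 1) ∣ p - q := by
  unfold toRng
  rw [Ideal.Quotient.eq, Ideal.mem_span_singleton]

lemma toRng_eq_zero {n : ℕ} (p : F4[X]) : toRng n p = 0 ↔ (X ^ n - 1) ∣ p := by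
  rw [← map_zero (toRng n), toRng_eq_iff, sub_zero]

lemma toRng_surj (n : ℕ) : Function.Surjective (toRng n) := Ideal.Quotient.mk_surjective

lemma toRng_Xn (n : ℕ) : toRng n X ^ n = 1 := by
  rw [← map_pow, ← map_one (toRng n), toRng_eq_iff]

lemma toRng_mod (n : ℕ) (p : F4[X]) : toRng n (p % (X ^ n - 1)) = toRng n p := by
  rw [toRng_eq_iff, ← dvd_neg, neg_sub]
  exact ⟨p / (X ^ n - 1), by linear_combination -(EuclideanDomain.div_add_mod p (X ^ n - 1))⟩

/-- coefficient vector as linear map -/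
def cV (n : ℕ) : F4[X] →ₗ[F4] (Fin n → F4) where
  toFun := coeffVec n
  map_add' p q := by ext i; simp [coeffVec, Polynomial.add_mod]
  map_smul' a p := by
    ext i
    have : a • p % (X ^ n - 1) = a • (p % (X ^ n - 1)) := by
      by_cases hn : n = 0
      · subst hn; simp
      · rw [← modByMonic_eq_mod _ (M_monic (Nat.pos_of_ne_zero hn)),
          ← modByMonic_eq_mod _ (M_monic (Nat.pos_of_ne_zero hn)), smul_modByMonic]
    simp [coeffVec, this]

lemma cV_eq_zero {n : ℕ} (hn : 0 < n) (p : F4[X]) : cV n p = 0 ↔ toRng n p = 0 := by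
  rw [toRng_eq_zero]
  constructor
  · intro h
    rw [← EuclideanDomain.mod_eq_zero]
    have hd : (p % (X ^ n - 1)).degree < (n : WithBot ℕ) := by
      have := Polynomial.degree_mod_lt p (M_monic hn).ne_zero
      rwa [degree_eq_natDegree (M_monic hn).ne_zero, M_natDegree] at this
    ext i
    by_cases hi : i < n
    · exact congrFun h ⟨i, hi⟩
    · rw [coeff_eq_zero_of_degree_lt]
      · simp
      · exact hd.trans_le (by exact_mod_cast not_lt.mp hi)
  · intro h
    ext i
    have := (EuclideanDomain.mod_eq_zero).mpr h
    simp [cV, coeffVec, this]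

lemma cV_eq_iff {n : ℕ} (hn : 0 < n) (p q : F4[X]) : cV n p = cV n q ↔ toRng n p = toRng n q := by
  rw [← sub_eq_zero, ← map_sub, cV_eq_zero hn, map_sub, sub_eq_zero]

lemma cV_X_pow {n : ℕ} (k i : ℕ) (hi : i < n) (h : k ≡ i [MOD n]) :
    cV n (X ^ k) = Pi.single ⟨i, hi⟩ 1 := by
  have hn : 0 < n := by omega
  have h1 : cV n (X ^ k) = cV n (X ^ i) := by
    rw [cV_eq_iff hn, map_pow, map_pow, pow_eq_pow_mod k (toRng_Xn n),
      pow_eq_pow_mod i (toRng_Xn n), h]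
  rw [h1]
  ext j
  have : (X ^ i : F4[X]) % (X ^ n - 1) = X ^ i := by
    rw [Polynomial.mod_eq_self_iff (M_monic hn).ne_zero,
      degree_eq_natDegree (M_monic hn).ne_zero, M_natDegree, degree_X_pow]
    exact_mod_cast hi
  simp [cV, coeffVec, this, coeff_X_pow, Pi.single_apply, Fin.ext_iff]

lemma cV_surj (n : ℕ) : Function.Surjective (cV n) := by
  intro v
  refine ⟨∑ i : Fin n, v i • X ^ (i : ℕ), ?_⟩
  rw [map_sum]
  simp_rw [map_smul]
  ext j
  rw [Finset.sum_apply, Finset.sum_eq_single j]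
  · rw [cV_X_pow (j : ℕ) j j.2 rfl]; simp
  · intro b _ hb
    rw [cV_X_pow (b : ℕ) b b.2 rfl]; simp [hb.symm]
  · simp

/-- conjugation on polynomials -/
def sg (n : ℕ) : F4[X] →+* F4[X] := eval₂RingHom (C.comp (frobenius F4 2)) (X ^ (n - 1))

lemma sg_C (n : ℕ) (a : F4) : sg n (C a) = C (a ^ 2) := by simp [sg, frobenius_def]
lemma sg_X (n : ℕ) : sg n X = X ^ (n - 1) := by simp [sg]

lemma sg_M (n : ℕ) : (X ^ n - 1 : F4[X]) ∣ sg n (X ^ n - 1) := by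
  rw [map_sub, map_pow, sg_X, map_one, ← pow_mul, mul_comm, pow_mul]
  simpa using sub_dvd_pow_sub_pow (X ^ n : F4[X]) 1 (n - 1)

/-- conjugation on the quotient -/
def sR (n : ℕ) : Rng n →+* Rng n :=
  Ideal.Quotient.lift _ ((toRng n).comp (sg n)) (by
    intro a ha
    rw [Ideal.mem_span_singleton] at ha
    rw [RingHom.comp_apply, toRng_eq_zero]
    exact (sg_M n).trans (map_dvd (sg n) ha))

lemma sR_toRng (n : ℕ) (p : F4[X]) : sR n (toRng n p) = toRng n (sg n p) := by
  simp [sR, toRng]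

lemma X_pow_cast {n : ℕ} (a b : ℕ) (h : a ≡ b [MOD n]) : toRng n X ^ a = toRng n X ^ b := by
  rw [pow_eq_pow_mod a (toRng_Xn n), pow_eq_pow_mod b (toRng_Xn n), h]

lemma sR_sR {n : ℕ} (hn : 0 < n) (x : Rng n) : sR n (sR n x) = x := by
  obtain ⟨p, rfl⟩ := toRng_surj n x
  rw [sR_toRng, sR_toRng]
  have : (((toRng n).comp (sg n)).comp (sg n)) = toRng n := by
    apply Polynomial.ringHom_ext
    · intro a
      simp only [RingHom.comp_apply, sg_C, F4_pow4]
    · simp only [RingHom.comp_apply, sg_X, map_pow]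
      rw [← pow_mul]
      conv_rhs => rw [← pow_one (toRng n X)]
      apply X_pow_cast
      obtain ⟨m, rfl⟩ : ∃ m, n = m + 1 := ⟨n - 1, by omega⟩
      simp only [Nat.add_sub_cancel]
      rcases m with _ | m
      · exact Nat.modEq_one
      · symm
        rw [Nat.modEq_iff_dvd' (by nlinarith)]
        refine ⟨m, ?_⟩
        rw [Nat.sub_eq_iff_eq_add (by nlinarith)]
        ring
  exact congrArg (fun f => f p) this

lemma hermInner_eq {n : ℕ} (hn : 0 < n) (p q : F4[X]) :
    hermInner (cV n p) (cV n q) = cV n (p * sg n q) ⟨0, hn⟩ := by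
  have hleft : ∀ u v w : Fin n → F4, hermInner (u + v) w = hermInner u w + hermInner v w := by
    intro u v w
    simp only [hermInner, Pi.add_apply, add_mul, Finset.sum_add_distrib]
  have hsl : ∀ (c : F4) (u w : Fin n → F4), hermInner (c • u) w = c * hermInner u w := by
    intro c u w
    simp only [hermInner, Pi.smul_apply, smul_eq_mul, Finset.mul_sum, mul_assoc]
  induction p using Polynomial.induction_on' with
  | add p p' hp hp' => rw [map_add, hleft, hp, hp', add_mul, map_add, Pi.add_apply]
  | monomial i a =>
  induction q using Polynomial.induction_on' with
  | add q q' hq hq' =>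
    rw [map_add, hermInner_add_right, hq, hq', map_add, mul_add, map_add, Pi.add_apply]
  | monomial j b =>
  rw [← C_mul_X_pow_eq_monomial, ← C_mul_X_pow_eq_monomial, map_mul (sg n), sg_C, map_pow (sg n), sg_X]
  have e : C a * X ^ i * (C (b ^ 2) * (X ^ (n - 1)) ^ j) = (a * b ^ 2) • X ^ (i + (n - 1) * j) := by
    rw [smul_eq_C_mul, C_mul]; ring
  rw [e, ← smul_eq_C_mul, ← smul_eq_C_mul, map_smul, map_smul, map_smul, hsl,
    hermInner_smul_right, cV_X_pow i (i % n) (Nat.mod_lt _ hn) (Nat.mod_modEq _ _).symm,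
    cV_X_pow j (j % n) (Nat.mod_lt _ hn) (Nat.mod_modEq _ _).symm,
    cV_X_pow (i + (n - 1) * j) ((i + (n - 1) * j) % n) (Nat.mod_lt _ hn) (Nat.mod_modEq _ _).symm]
  have key : i % n = j % n ↔ 0 = (i + (n - 1) * j) % n := by
    have h2 : (i + (n - 1) * j) + j = i + n * j := by
      obtain ⟨m, rfl⟩ : ∃ m, n = m + 1 := ⟨n - 1, by omega⟩
      simp only [Nat.add_sub_cancel]; ring
    constructor
    · intro h
      have : (i + (n - 1) * j) + j ≡ 0 + j [MOD n] := by
        rw [h2, zero_add]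
        unfold Nat.ModEq; simp [h]
      have := Nat.ModEq.add_right_cancel' _ this
      unfold Nat.ModEq at this
      rw [this]; simp
    · intro h
      have h3 : (i + (n - 1) * j) ≡ 0 [MOD n] := by unfold Nat.ModEq; rw [← h]; simp
      have := h3.add_right j
      rw [h2, zero_add] at this
      unfold Nat.ModEq at this
      simpa using this
  simp only [hermInner, Pi.smul_apply, Pi.single_apply, smul_eq_mul, Fin.ext_iff]
  rw [Finset.sum_eq_single ⟨i % n, Nat.mod_lt _ hn⟩]
  · by_cases h : i % n = j % n
    · rw [if_pos rfl, if_pos h, if_pos (key.mp h)]; ring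
    · rw [if_pos rfl, if_neg h, if_neg (fun h' => h (key.mpr h'))]; ring
  · intro k _ hk
    rw [if_neg (by simpa [Fin.ext_iff] using hk)]; ring
  · simp

lemma nondeg {n : ℕ} (hn : 0 < n) (p : F4[X]) (h : ∀ a, cV n (a * p) ⟨0, hn⟩ = 0) :
    toRng n p = 0 := by
  rw [← cV_eq_zero hn]
  ext i
  have h1 := hermInner_eq hn p (X ^ (i : ℕ))
  rw [mul_comm, h, cV_X_pow (i : ℕ) i i.2 rfl] at h1
  simpa [hermInner, Pi.single_apply] using h1

lemma toRng_conjT {n : ℕ} (hn : 0 < n) (f : F4[X]) : toRng n (conjT n f) = sR n (toRng n f) := by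
  rw [← toRng_mod n f, sR_toRng]
  have hd : (f % (X ^ n - 1)).natDegree < n := by
    have := Polynomial.natDegree_mod_lt f (q := X ^ n - 1) (by rw [M_natDegree]; omega)
    rwa [M_natDegree] at this
  unfold conjT
  generalize f % (X ^ n - 1) = r at hd ⊢
  conv_rhs => rw [r.as_sum_range_C_mul_X_pow' hd, Finset.range_eq_Ico,
    Finset.sum_eq_sum_Ico_succ_bot hn]
  simp only [map_add, map_sum, map_mul (sg n), map_pow (sg n), sg_C, sg_X]
  congr 1
  · simp
  refine Finset.sum_congr rfl fun j hj => ?_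
  rw [map_mul (toRng n), map_mul (toRng n)]
  congr 1
  rw [← pow_mul, map_pow, map_pow]
  apply X_pow_cast
  have hj := Finset.mem_Ico.mp hj
  have : (n - 1) * j = (n - j) + n * (j - 1) := by
    have h1 : 1 ≤ n := hn
    zify [hj.1, hj.2.le, h1]; ring
  rw [this]
  unfold Nat.ModEq; simp

lemma toRng_dualGen (n : ℕ) (hn : 0 < n) (g : F4[X]) :
    toRng n (dualGen n g) = sR n (toRng n ((X ^ n - 1) / g)) *
      toRng n X ^ ((X ^ n - 1) / g).natDegree := by
  unfold dualGen
  generalize (X ^ n - 1) / g = h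
  rw [sR_toRng]
  conv_rhs => enter [1]; rw [h.as_sum_range_C_mul_X_pow]
  simp only [map_sum, Finset.sum_mul]
  refine Finset.sum_congr rfl fun j hj => ?_
  have hj' : j ≤ h.natDegree := by simpa [Nat.lt_succ_iff] using hj
  rw [map_mul (sg n), map_pow (sg n), sg_C, sg_X, map_mul, map_mul,
    mul_assoc, ← pow_mul, map_pow _ X, map_pow _ X, ← pow_add]
  congr 1
  apply X_pow_cast
  have : (n - 1) * j + h.natDegree = (h.natDegree - j) + n * j := by
    obtain ⟨m, rfl⟩ : ∃ m, n = m + 1 := ⟨n - 1, by omega⟩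
    simp only [Nat.add_sub_cancel]
    zify [hj']; ring
  rw [this]
  unfold Nat.ModEq; simp

lemma dualGen_eq (n : ℕ) (g : F4[X]) :
    dualGen n g = (((X ^ n - 1) / g).map (frobenius F4 2)).reverse := by
  unfold dualGen
  generalize (X ^ n - 1) / g = h
  let φ : F4[X] →+ F4[X] := ⟨⟨reflect h.natDegree, reflect_zero⟩, fun a b => reflect_add a b _⟩
  have : (h.map (frobenius F4 2)).reverse = φ (h.map (frobenius F4 2)) := by
    simp [φ, reverse, natDegree_map]
  rw [this]
  conv_rhs => enter [2]; rw [h.as_sum_range_C_mul_X_pow]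
  rw [Polynomial.map_sum, map_sum]
  refine Finset.sum_congr rfl fun j hj => ?_
  have hj' : j ≤ h.natDegree := by simpa [Nat.lt_succ_iff] using hj
  simp only [Polynomial.map_mul, Polynomial.map_pow, map_C, map_X, frobenius_def]
  change _ = reflect h.natDegree (C (h.coeff j ^ 2) * X ^ j)
  rw [reflect_C_mul_X_pow, revAt_le hj']

lemma reverse_M {n : ℕ} : (X ^ n - 1 : F4[X]).reverse = -(X ^ n - 1) := by
  have h : (X ^ n - 1 : F4[X]) = C 1 * X ^ n + C (-1) * X ^ 0 := by simp [sub_eq_add_neg]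
  rw [reverse, M_natDegree, h, reflect_add, reflect_C_mul_X_pow, reflect_C_mul_X_pow,
    revAt_le le_rfl, revAt_le (Nat.zero_le _)]
  simp

lemma dualGen_prop {n : ℕ} (hn : 0 < n) (g : F4[X]) (hm : g.Monic) (hd : g ∣ X ^ n - 1) :
    ∃ k, dualGen n g * k = X ^ n - 1 ∧ k.natDegree = g.natDegree := by
  refine ⟨-(g.map (frobenius F4 2)).reverse, ?_, ?_⟩
  · rw [dualGen_eq, mul_neg, ← reverse_mul_of_domain, ← Polynomial.map_mul,
      mul_comm _ g, EuclideanDomain.mul_div_cancel' hm.ne_zero hd]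
    simp [reverse_M]
  · rw [natDegree_neg, reverse_natDegree, natDegree_map, natTrailingDegree_eq_zero.mpr, Nat.sub_zero]
    right
    rw [coeff_map]
    intro h0
    have h1 : g.coeff 0 = 0 := by simpa [frobenius_def] using h0
    obtain ⟨q, hq⟩ := hd
    have := congrArg (fun p => coeff p 0) hq
    simp [mul_coeff_zero, h1, coeff_X_pow, hn.ne] at this

lemma hermInner_add_left {m : ℕ} (u v w : Fin m → F4) :
    hermInner (u + v) w = hermInner u w + hermInner v w := by
  simp only [hermInner, Pi.add_apply, add_mul, Finset.sum_add_distrib]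

lemma hermInner_smul_left {m : ℕ} (c : F4) (u w : Fin m → F4) :
    hermInner (c • u) w = c * hermInner u w := by
  simp only [hermInner, Pi.smul_apply, smul_eq_mul, Finset.mul_sum, mul_assoc]

lemma mem_dual_iff {n : ℕ} (hn : 0 < n) (g₁ g₂ ν q₁ q₂ : F4[X]) :
    ((cV n q₁, cV n q₂) : (Fin n → F4) × (Fin n → F4)) ∈ hermDualPair (Cqc n g₁ g₂ ν) ↔
      toRng n g₁ * (toRng n ν * sR n (toRng n q₁) + sR n (toRng n q₂)) = 0 ∧
      toRng n g₂ * (sR n (toRng n q₁) + toRng n ν * sR n (toRng n q₂)) = 0 := by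
  have e1 : ∀ a, hermInner2 (coeffVec n (a * ν * g₁), coeffVec n (a * g₁)) (cV n q₁, cV n q₂)
      = cV n (a * (g₁ * (ν * sg n q₁ + sg n q₂))) ⟨0, hn⟩ := by
    intro a
    change hermInner (cV n _) _ + hermInner (cV n _) _ = _
    simp only [hermInner_eq hn]
    rw [← Pi.add_apply, ← map_add]
    refine congrArg (fun t => cV n t ⟨0, hn⟩) ?_; ring
  have e2 : ∀ a, hermInner2 (coeffVec n (a * g₂), coeffVec n (a * ν * g₂)) (cV n q₁, cV n q₂)
      = cV n (a * (g₂ * (sg n q₁ + ν * sg n q₂))) ⟨0, hn⟩ := by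
    intro a
    change hermInner (cV n _) _ + hermInner (cV n _) _ = _
    simp only [hermInner_eq hn]
    rw [← Pi.add_apply, ← map_add]
    refine congrArg (fun t => cV n t ⟨0, hn⟩) ?_; ring
  simp only [sR_toRng, ← map_mul, ← map_add]
  constructor
  · intro h
    constructor
    · apply nondeg hn
      intro a
      rw [← e1]
      exact h _ (Submodule.subset_span (Or.inl ⟨a, rfl⟩))
    · apply nondeg hn
      intro a
      rw [← e2]
      exact h _ (Submodule.subset_span (Or.inr ⟨a, rfl⟩))
  · rintro ⟨h1, h2⟩ u hu
    unfold Cqc at hu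
    induction hu using Submodule.span_induction with
    | mem x hx =>
      rcases hx with ⟨a, rfl⟩ | ⟨a, rfl⟩
      · rw [e1, (cV_eq_zero hn _).mpr]
        · rfl
        · rw [map_mul, h1, mul_zero]
      · rw [e2, (cV_eq_zero hn _).mpr]
        · rfl
        · rw [map_mul, h2, mul_zero]
    | zero => simp [hermInner2, hermInner]
    | add x y _ _ hx hy =>
      simp only [hermInner2, Prod.fst_add, Prod.snd_add, hermInner_add_left] at hx hy ⊢
      linear_combination hx + hy
    | smul c x _ hx =>
      simp only [hermInner2, Prod.smul_fst, Prod.smul_snd, hermInner_smul_left] at hx ⊢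
      linear_combination c * hx

/-- parametrization of D -/
def Phi (n : ℕ) (k₁ k₂ w : F4[X]) : F4[X] × F4[X] →ₗ[F4] (Fin n → F4) × (Fin n → F4) where
  toFun c := (cV n (-w * c.1 * k₁ + c.2 * k₂), cV n (c.1 * k₁ + -w * c.2 * k₂))
  map_add' x y := by
    ext1 <;> simp only [← map_add, Prod.fst_add, Prod.snd_add] <;> congr 1 <;> ring
  map_smul' a x := by
    ext1 <;> simp only [← map_smul, Prod.smul_fst, Prod.smul_snd, RingHom.id_apply] <;> congr 1 <;>
      simp only [smul_eq_C_mul] <;> ring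

lemma Dqc_eq_range (n : ℕ) (g₁ g₂ ν : F4[X]) :
    Dqc n g₁ g₂ ν = (Phi n (dualGen n g₁) (dualGen n g₂) (conjT n ν)).range := by
  apply le_antisymm
  · unfold Dqc
    rw [Submodule.span_le]
    rintro x (⟨c, rfl⟩ | ⟨s, rfl⟩)
    · exact ⟨(c, 0), by
        refine Prod.ext (congrArg (cV n) ?_) (congrArg (cV n) ?_) <;> simp⟩
    · exact ⟨(0, s), by
        refine Prod.ext (congrArg (cV n) ?_) (congrArg (cV n) ?_) <;> simp⟩
  · rintro _ ⟨⟨c, s⟩, rfl⟩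
    have : Phi n (dualGen n g₁) (dualGen n g₂) (conjT n ν) (c, s) =
      (coeffVec n (-(conjT n ν) * c * dualGen n g₁), coeffVec n (c * dualGen n g₁)) +
      (coeffVec n (s * dualGen n g₂), coeffVec n (-(conjT n ν) * s * dualGen n g₂)) := by
      change (cV n _, cV n _) = (cV n _, cV n _) + (cV n _, cV n _)
      rw [Prod.mk_add_mk, ← map_add, ← map_add]
    rw [this]
    exact add_mem (Submodule.subset_span (Or.inl ⟨c, rfl⟩))
      (Submodule.subset_span (Or.inr ⟨s, rfl⟩))

lemma two_zero (n : ℕ) : (2 : Rng n) = 0 := by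
  have h : (2 : F4[X]) = 0 := by
    have : ((2 : ℕ) : F4[X]) = 0 := CharP.cast_eq_zero _ 2
    exact_mod_cast this
  rw [← map_ofNat (toRng n) 2, h, map_zero]

lemma unit_nu {n : ℕ} (ν : F4[X]) (hcop : IsCoprime (ν - 1) (X ^ n - 1)) :
    ∃ e : Rng n, e * (toRng n ν ^ 2 - 1) = 1 := by
  obtain ⟨a, b, hab⟩ := hcop
  have h : toRng n a * (toRng n ν - 1) = 1 := by
    have h0 : toRng n (X ^ n - 1) = 0 := (toRng_eq_zero _).mpr dvd_rfl
    have := congrArg (toRng n) hab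
    rw [map_add, map_mul, map_mul, h0, mul_zero, add_zero, map_sub, map_one] at this
    exact this
  refine ⟨toRng n a ^ 2, ?_⟩
  linear_combination (toRng n a * (toRng n ν - 1) + 1) * h +
    toRng n a ^ 2 * (toRng n ν - 1) * two_zero n

lemma Phi_inj {n : ℕ} (hn : 0 < n) (k₁ k₂ w c s : F4[X])
    (hw : ∃ e : Rng n, e * (toRng n w ^ 2 - 1) = 1) (h : Phi n k₁ k₂ w (c, s) = 0) :
    toRng n (c * k₁) = 0 ∧ toRng n (s * k₂) = 0 := by
  obtain ⟨e, he⟩ := hw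
  have h1 := (cV_eq_zero hn _).mp (congrArg Prod.fst h)
  have h2 := (cV_eq_zero hn _).mp (congrArg Prod.snd h)
  simp only [map_add, map_mul, map_neg] at h1 h2 ⊢
  constructor
  · linear_combination -(toRng n c * toRng n k₁) * he - e * h2 - e * toRng n w * h1
  · linear_combination -(toRng n s * toRng n k₂) * he - e * h1 - e * toRng n w * h2

theorem part1 {n : ℕ} (hn : 0 < n) (g₁ g₂ ν : F4[X])
    (hg₁m : g₁.Monic) (hg₁d : g₁ ∣ X ^ n - 1)
    (hg₂m : g₂.Monic) (hg₂d : g₂ ∣ X ^ n - 1)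
    (hcop : IsCoprime (ν - 1) (X ^ n - 1)) :
    Dqc n g₁ g₂ ν = hermDualPair (Cqc n g₁ g₂ ν) := by
  obtain ⟨e, he⟩ := unit_nu ν hcop
  have ann : ∀ g : F4[X], g.Monic → g ∣ X ^ n - 1 →
      toRng n g * toRng n ((X ^ n - 1) / g) = 0 ∧
      ∀ x, toRng n g * x = 0 → ∃ y, x = toRng n ((X ^ n - 1) / g) * y := by
    intro g hm hd
    have hgh : g * ((X ^ n - 1) / g) = X ^ n - 1 := EuclideanDomain.mul_div_cancel' hm.ne_zero hd
    constructor
    · rw [← map_mul, toRng_eq_zero, hgh]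
    · intro x hx
      obtain ⟨p, rfl⟩ := toRng_surj n x
      rw [← map_mul, toRng_eq_zero] at hx
      have hx' : g * ((X ^ n - 1) / g) ∣ g * p := by rw [hgh]; exact hx
      obtain ⟨y, hy⟩ := (mul_dvd_mul_iff_left hm.ne_zero).mp hx'
      exact ⟨toRng n y, by rw [← map_mul, hy]⟩
  obtain ⟨a1, b1⟩ := ann g₁ hg₁m hg₁d
  obtain ⟨a2, b2⟩ := ann g₂ hg₂m hg₂d
  have d1 := toRng_dualGen n hn g₁
  have d2 := toRng_dualGen n hn g₂
  have hXu : ∀ d, toRng n X ^ d * toRng n X ^ ((n - 1) * d) = 1 := by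
    intro d
    rw [← pow_add, show d + (n - 1) * d = n * d by
      obtain ⟨m, rfl⟩ : ∃ m, n = m + 1 := ⟨n - 1, by omega⟩
      simp only [Nat.add_sub_cancel]; ring, pow_mul, toRng_Xn, one_pow]
  have u1 := hXu ((X ^ n - 1) / g₁).natDegree
  have u2 := hXu ((X ^ n - 1) / g₂).natDegree
  have hc := toRng_conjT hn ν
  generalize toRng n X ^ ((X ^ n - 1) / g₁).natDegree = x1 at *
  generalize toRng n X ^ ((X ^ n - 1) / g₂).natDegree = x2 at *
  generalize toRng n X ^ ((n - 1) * ((X ^ n - 1) / g₁).natDegree) = y1 at *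
  generalize toRng n X ^ ((n - 1) * ((X ^ n - 1) / g₂).natDegree) = y2 at *
  generalize toRng n ((X ^ n - 1) / g₁) = h1 at *
  generalize toRng n ((X ^ n - 1) / g₂) = h2 at *
  rw [Dqc_eq_range]
  ext ⟨v1, v2⟩
  constructor
  · rintro ⟨⟨c, s⟩, hcs⟩
    rw [← hcs]
    refine (mem_dual_iff hn _ _ _ _ _).mpr ?_
    simp only [map_add, map_mul, map_neg, hc, d1, d2, sR_sR hn]
    constructor
    · linear_combination (1 - toRng n ν ^ 2) * sR n (toRng n c) * sR n x1 * a1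
    · linear_combination (1 - toRng n ν ^ 2) * sR n (toRng n s) * sR n x2 * a2
  · intro h
    obtain ⟨q₁, rfl⟩ := cV_surj n v1
    obtain ⟨q₂, rfl⟩ := cV_surj n v2
    rw [mem_dual_iff hn] at h
    obtain ⟨p, hp⟩ := b1 _ h.1
    obtain ⟨q, hq⟩ := b2 _ h.2
    obtain ⟨c, hcc⟩ := toRng_surj n (-sR n e * sR n p * y1)
    obtain ⟨s, hss⟩ := toRng_surj n (-sR n e * sR n q * y2)
    have hp' := congrArg (sR n) hp
    have hq' := congrArg (sR n) hq
    have he' := congrArg (sR n) he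
    simp only [map_add, map_mul, map_sub, map_pow, map_one, sR_sR hn] at hp' hq' he'
    refine ⟨(c, s), ?_⟩
    refine Prod.ext ((cV_eq_iff hn _ _).mpr ?_) ((cV_eq_iff hn _ _).mpr ?_)
    · simp only [map_add, map_mul, map_neg, hc, d1, d2, hcc, hss]
      linear_combination (sR n (toRng n ν) * sR n e * sR n p * sR n h1) * u1
        - sR n e * sR n q * sR n h2 * u2 - sR n e * sR n (toRng n ν) * hp' + sR n e * hq' 
        + toRng n q₁ * he'
    · simp only [map_add, map_mul, map_neg, hc, d1, d2, hcc, hss]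
      linear_combination (sR n (toRng n ν) * sR n e * sR n q * sR n h2) * u2
        - sR n e * sR n p * sR n h1 * u1 - sR n e * sR n (toRng n ν) * hq' + sR n e * hp' 
        + toRng n q₂ * he'

theorem part2 {n : ℕ} (hn : 0 < n) (g₁ g₂ ν : F4[X])
    (hg₁m : g₁.Monic) (hg₁d : g₁ ∣ X ^ n - 1)
    (hg₂m : g₂.Monic) (hg₂d : g₂ ∣ X ^ n - 1)
    (hcop : IsCoprime (ν - 1) (X ^ n - 1)) :
    Module.finrank F4 ↥(Dqc n g₁ g₂ ν) = g₁.natDegree + g₂.natDegree := by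
  have hw : ∃ e : Rng n, e * (toRng n (conjT n ν) ^ 2 - 1) = 1 := by
    obtain ⟨e, he⟩ := unit_nu ν hcop
    refine ⟨sR n e, ?_⟩
    have := congrArg (sR n) he
    rw [toRng_conjT hn]
    simpa only [map_mul, map_sub, map_pow, map_one] using this
  obtain ⟨k1, hk1, dk1⟩ := dualGen_prop hn g₁ hg₁m hg₁d
  obtain ⟨k2, hk2, dk2⟩ := dualGen_prop hn g₂ hg₂m hg₂d
  rw [Dqc_eq_range]
  generalize dualGen n g₁ = f1 at *
  generalize dualGen n g₂ = f2 at *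
  rw [← dk1, ← dk2]
  have M0 := (M_monic hn).ne_zero
  have key : ∀ f k c : F4[X], f * k = X ^ n - 1 → c ∈ degreeLT F4 k.natDegree →
      toRng n (c * f) = 0 → c = 0 := by
    intro f k c hfk hc h
    rw [toRng_eq_zero, ← hfk, mul_comm c] at h
    have hf : f ≠ 0 := by rintro rfl; rw [zero_mul] at hfk; exact M0 hfk.symm
    have hk : k ≠ 0 := by rintro rfl; rw [mul_zero] at hfk; exact M0 hfk.symm
    have h := (mul_dvd_mul_iff_left hf).mp h
    refine eq_zero_of_dvd_of_degree_lt h ?_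
    rw [mem_degreeLT] at hc
    rwa [degree_eq_natDegree hk]
  have key2 : ∀ f k c : F4[X], f * k = X ^ n - 1 → ∃ r ∈ degreeLT F4 k.natDegree,
      toRng n (r * f) = toRng n (c * f) := by
    intro f k c hfk
    have hk : k ≠ 0 := by rintro rfl; rw [mul_zero] at hfk; exact M0 hfk.symm
    refine ⟨c % k, ?_, ?_⟩
    · rw [mem_degreeLT, ← degree_eq_natDegree hk]
      exact degree_mod_lt c hk
    · rw [toRng_eq_iff, ← hfk]
      exact ⟨-(c / k), by linear_combination f * (EuclideanDomain.div_add_mod c k)⟩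
  let ι : (degreeLT F4 k1.natDegree × degreeLT F4 k2.natDegree) →ₗ[F4] F4[X] × F4[X] :=
    (degreeLT F4 k1.natDegree).subtype.prodMap (degreeLT F4 k2.natDegree).subtype
  let Ψ := (Phi n f1 f2 (conjT n ν)).comp ι
  have hr : (Phi n f1 f2 (conjT n ν)).range = Ψ.range := by
    apply le_antisymm
    · rintro _ ⟨⟨c, s⟩, rfl⟩
      obtain ⟨c', hc', ec⟩ := key2 f1 k1 c hk1
      obtain ⟨s', hs', es⟩ := key2 f2 k2 s hk2
      refine ⟨(⟨c', hc'⟩, ⟨s', hs'⟩), ?_⟩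
      rw [map_mul, map_mul] at ec es
      refine Prod.ext ((cV_eq_iff hn _ _).mpr ?_) ((cV_eq_iff hn _ _).mpr ?_)
      · simp only [map_add, map_mul, map_neg]
        change -_ * toRng n c' * _ + toRng n s' * _ = _
        linear_combination es - toRng n (conjT n ν) * ec
      · simp only [map_add, map_mul, map_neg]
        change toRng n c' * _ + -_ * toRng n s' * _ = _
        linear_combination ec - toRng n (conjT n ν) * es
    · exact LinearMap.range_comp_le_range _ _
  rw [hr, LinearMap.finrank_range_of_inj]
  · have : ∀ m, Module.finrank F4 (degreeLT F4 m) = m := fun m => by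
      rw [(degreeLTEquiv F4 m).finrank_eq]; simp
    have : ∀ m, Module.Finite F4 (degreeLT F4 m) := fun m =>
      Module.Finite.equiv (degreeLTEquiv F4 m).symm
    rw [Module.finrank_prod]; simp [*]
  · rw [← LinearMap.ker_eq_bot, LinearMap.ker_eq_bot']
    rintro ⟨⟨c, hc⟩, ⟨s, hs⟩⟩ h
    obtain ⟨h1, h2⟩ := Phi_inj hn f1 f2 (conjT n ν) c s hw h
    have := key f1 k1 c hk1 hc h1
    have := key f2 k2 s hk2 hs h2
    subst_vars
    rfl

/-- `D` is exactly the Hermitian dual code of the 2-generator quasi-cyclic code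
`C(g₁,g₂,ν)`; in particular `dim D = deg g₁ + deg g₂`. -/
theorem D_eq_herm_dual_C (n : ℕ) (hn : Odd n) (g₁ g₂ ν : Polynomial F4)
    (hg₁m : g₁.Monic) (hg₁d : g₁ ∣ X ^ n - 1)
    (hg₂m : g₂.Monic) (hg₂d : g₂ ∣ X ^ n - 1)
    (hcop : IsCoprime (ν - 1) (X ^ n - 1)) :
    Dqc n g₁ g₂ ν = hermDualPair (Cqc n g₁ g₂ ν) ∧
      Module.finrank F4 ↥(Dqc n g₁ g₂ ν) = g₁.natDegree + g₂.natDegree := by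
  exact ⟨part1 hn.pos g₁ g₂ ν hg₁m hg₁d hg₂m hg₂d hcop, part2 hn.pos g₁ g₂ ν hg₁m hg₁d hg₂m hg₂d hcop⟩

end
end

section
/- Let F₄ = GF(4), let n be odd, let g₁, g₂ be monic divisors of Xⁿ−1 in F₄[X], and let ν ∈ F₄[X]. Assume: g₁ divides g₁^{⊥h}; g₂ divides g₂^{⊥h}; g₂ divides the remainder of (ν+ν̄)·g₁^{⊥h} modulo Xⁿ−1; g₁ divides the remainder of (ν·ν̄+1)·g₁^{⊥h} modulo Xⁿ−1; and g₂ divides the remainder of (ν·ν̄+1)·g₂^{⊥h} modulo Xⁿ−1. Then the code D ⊆ F₄^{2n}, defined as the F₄-span of all vectors ([−ν̄·c·g₁^{⊥h}]ₙ, [c·g₁^{⊥h}]ₙ) and ([s·g₂^{⊥h}]ₙ, [−ν̄·s·g₂^{⊥h}]ₙ) for c, s ∈ F₄[X], is Hermitian self-orthogonal: D ⊆ D^{⊥h}. -/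
open Polynomial

set_option synthInstance.maxHeartbeats 1000000
set_option maxHeartbeats 1000000

noncomputable section

lemma aux_monic {n : ℕ} (hn : 0 < n) : (X ^ n - 1 : Polynomial F4).Monic := by
  simpa using monic_X_pow_sub_C (1 : F4) hn.ne'

lemma aux_toRng_eq_zero {n : ℕ} {p : Polynomial F4} : toRng n p = 0 ↔ (X ^ n - 1) ∣ p := by
  rw [toRng, Ideal.Quotient.eq_zero_iff_mem, Ideal.mem_span_singleton]

lemma aux_toRng_mod (n : ℕ) (p : Polynomial F4) : toRng n (p % (X ^ n - 1)) = toRng n p := by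
  rw [← sub_eq_zero, ← map_sub, aux_toRng_eq_zero]
  refine ⟨-(p / (X ^ n - 1)), ?_⟩
  have := EuclideanDomain.mod_add_div p (X ^ n - 1)
  linear_combination this

lemma aux_toRng_X (n : ℕ) : (toRng n X) ^ n = 1 := by
  have : toRng n (X ^ n - 1) = 0 := aux_toRng_eq_zero.2 dvd_rfl
  rw [map_sub, map_pow, map_one] at this
  exact sub_eq_zero.1 this

lemma aux_pow4 (a : F4) : a ^ 4 = a := by
  haveI : Finite F4 := Nat.finite_of_card_ne_zero (by
    rw [GaloisField.card 2 2 (by norm_num)]; norm_num)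
  haveI : Fintype F4 := Fintype.ofFinite _
  have h : Fintype.card F4 = 4 := by
    have := GaloisField.card 2 2 (by norm_num)
    rw [Nat.card_eq_fintype_card] at this
    simpa using this
  have := FiniteField.pow_card a
  rwa [h] at this

lemma aux_mod_eq {n : ℕ} {p r : Polynomial F4} (h : toRng n p = toRng n r) :
    p % (X ^ n - 1) = r % (X ^ n - 1) := by
  rw [← sub_eq_zero, ← map_sub, aux_toRng_eq_zero] at h
  have := (EuclideanDomain.mod_eq_zero).2 h
  rw [Polynomial.sub_mod] at this
  exact sub_eq_zero.1 this

/-- constant term functional -/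
def auxCT (n : ℕ) : Polynomial F4 →ₗ[F4] F4 :=
  (Polynomial.lcoeff F4 0).comp (Polynomial.modByMonicHom (X ^ n - 1))

lemma auxCT_apply {n : ℕ} (hn : 0 < n) (p : Polynomial F4) :
    auxCT n p = (p % (X ^ n - 1)).coeff 0 := by
  rw [← modByMonic_eq_mod _ (aux_monic hn)]
  rfl

lemma auxCT_congr {n : ℕ} (hn : 0 < n) {p r : Polynomial F4} (h : toRng n p = toRng n r) :
    auxCT n p = auxCT n r := by
  rw [auxCT_apply hn, auxCT_apply hn, aux_mod_eq h]

lemma aux_deg {n : ℕ} (hn : 0 < n) : (X ^ n - 1 : Polynomial F4).degree = n := by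
  simpa using degree_X_pow_sub_C hn (1 : F4)

lemma auxCT_X_pow {n : ℕ} (hn : 0 < n) (m : ℕ) :
    auxCT n (X ^ m) = if m % n = 0 then 1 else 0 := by
  have h : toRng n (X ^ m) = toRng n (X ^ (m % n)) := by
    conv_lhs => rw [← Nat.mod_add_div m n]
    rw [pow_add, pow_mul, map_mul, map_pow _ (X ^ n), map_pow _ X n, aux_toRng_X, one_pow, mul_one]
  rw [auxCT_congr hn h, auxCT_apply hn, (Polynomial.mod_eq_self_iff (aux_monic hn).ne_zero).2,
    coeff_X_pow]
  · simp only [eq_comm]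
  · rw [aux_deg hn, degree_X_pow]
    exact_mod_cast Nat.mod_lt m hn

lemma aux_sum {n : ℕ} (hn : 0 < n) (p : Polynomial F4) :
    p % (X ^ n - 1) = ∑ i : Fin n, C (coeffVec n p i) * X ^ (i : ℕ) := by
  have hd : (p % (X ^ n - 1)).degree < (n : WithBot ℕ) := by
    have := EuclideanDomain.mod_lt p (aux_monic hn).ne_zero
    rw [← aux_deg hn]; exact this
  have h2 := Polynomial.as_sum_range' (p % (X ^ n - 1)) n
    (by
      by_cases h0 : p % (X ^ n - 1) = 0
      · rw [h0]; simpa using hn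
      · exact (Polynomial.natDegree_lt_iff_degree_lt h0).2 hd)
  conv_lhs => rw [h2]
  rw [Finset.sum_range]
  exact Finset.sum_congr rfl fun i _ => by rw [← C_mul_X_pow_eq_monomial]; rfl

lemma aux_conjT {n : ℕ} (hn : 0 < n) (p : Polynomial F4) :
    toRng n (conjT n p) =
      toRng n (∑ i : Fin n, C ((coeffVec n p i) ^ 2) * X ^ (n - (i : ℕ))) := by
  have e : (∑ i : Fin n, C ((coeffVec n p i) ^ 2) * X ^ (n - (i : ℕ))) =
      ∑ i ∈ Finset.range n, C (((p % (X ^ n - 1)).coeff i) ^ 2) * X ^ (n - i) := by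
    rw [Finset.sum_range]; rfl
  rw [e, Finset.range_eq_Ico, Finset.sum_eq_sum_Ico_succ_bot hn, conjT, map_add, map_add, map_mul,
    Nat.sub_zero, map_pow (toRng n) X, aux_toRng_X, mul_one]

lemma aux_herm {n : ℕ} (hn : 0 < n) (f g : Polynomial F4) :
    hermInner (coeffVec n f) (coeffVec n g) = auxCT n (f * conjT n g) := by
  have h : toRng n (f * conjT n g) = toRng n ((∑ i : Fin n, C (coeffVec n f i) * X ^ (i : ℕ)) *
      (∑ i : Fin n, C ((coeffVec n g i) ^ 2) * X ^ (n - (i : ℕ)))) := by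
    rw [map_mul, map_mul, aux_conjT hn, ← aux_sum hn, aux_toRng_mod]
  rw [auxCT_congr hn h, Finset.sum_mul_sum, map_sum, hermInner]
  refine Finset.sum_congr rfl fun i _ => ?_
  rw [map_sum, Finset.sum_eq_single i]
  · have : C (coeffVec n f i) * X ^ (i : ℕ) * (C (coeffVec n g i ^ 2) * X ^ (n - (i : ℕ)))
      = (coeffVec n f i * coeffVec n g i ^ 2) • (X ^ n : Polynomial F4) := by
      have hX : (X ^ n : Polynomial F4) = X ^ (i : ℕ) * X ^ (n - (i : ℕ)) := by
        rw [← pow_add]; congr 1; omega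
      rw [hX, smul_eq_C_mul, C_mul]; ring
    rw [this, map_smul, auxCT_X_pow hn]; simp
  · intro j _ hj
    have : C (coeffVec n f i) * X ^ (i : ℕ) * (C (coeffVec n g j ^ 2) * X ^ (n - (j : ℕ)))
      = (coeffVec n f i * coeffVec n g j ^ 2) • (X ^ (i + (n - j) : ℕ) : Polynomial F4) := by
      rw [pow_add, smul_eq_C_mul, C_mul]; ring
    rw [this, map_smul, auxCT_X_pow hn, if_neg, smul_zero]
    intro h0
    apply hj
    have hi := i.2
    have hj' := j.2
    ext
    obtain ⟨k, hk⟩ := Nat.dvd_of_mod_eq_zero h0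
    have hk1 : k = 1 := by
      rcases k with _ | _ | k
      · omega
      · rfl
      · exfalso
        have : n * (k + 1 + 1) = n * k + n + n := by ring
        have := Nat.zero_le (n * k)
        omega
    subst hk1
    omega
  · simp

lemma aux_herm2 {n : ℕ} (hn : 0 < n) (f f' g g' : Polynomial F4)
    (h : toRng n f * toRng n (conjT n g) + toRng n f' * toRng n (conjT n g') = 0) :
    hermInner2 (coeffVec n f, coeffVec n f') (coeffVec n g, coeffVec n g') = 0 := by
  have h' : toRng n (f * conjT n g + f' * conjT n g') = toRng n 0 := by
    rw [map_add, map_mul, map_mul, h, map_zero]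
  simp only [hermInner2]
  rw [aux_herm hn, aux_herm hn, ← map_add, auxCT_congr hn h', map_zero]

/-- polynomial-level conjugation into the quotient -/
def auxS (n : ℕ) : Polynomial F4 →+* Rng n :=
  eval₂RingHom ((toRng n).comp (C.comp (frobenius F4 2))) (toRng n X ^ (n - 1))

lemma auxS_C (n : ℕ) (a : F4) : auxS n (C a) = toRng n (C (a ^ 2)) := by
  simp [auxS, frobenius_def]

lemma auxS_X (n : ℕ) : auxS n X = toRng n X ^ (n - 1) := by
  simp [auxS]

lemma auxS_dvd (n : ℕ) (p : Polynomial F4) (h : (X ^ n - 1) ∣ p) : auxS n p = 0 := by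
  obtain ⟨r, rfl⟩ := h
  rw [map_mul, map_sub, map_pow, map_one, auxS_X, ← pow_mul, mul_comm (n - 1), pow_mul,
    aux_toRng_X, one_pow, sub_self, zero_mul]

lemma aux_xinv {n : ℕ} (i : ℕ) (hi : i ≤ n) :
    (toRng n X ^ (n - 1)) ^ i = toRng n X ^ (n - i) := by
  rcases Nat.eq_zero_or_pos n with rfl | hn
  · obtain rfl : i = 0 := by omega
    simp
  have e : toRng n X ^ i * toRng n X ^ (n - i) = 1 := by
    rw [← pow_add, Nat.add_sub_cancel' hi, aux_toRng_X]
  have e2 : (toRng n X ^ (n - 1)) ^ i * toRng n X ^ i = 1 := by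
    rw [← mul_pow, ← pow_succ, Nat.sub_add_cancel hn, aux_toRng_X, one_pow]
  linear_combination (-(toRng n X ^ (n - 1)) ^ i) * e + toRng n X ^ (n - i) * e2

lemma aux_xinv2 {n : ℕ} (hn : 0 < n) :
    (toRng n X ^ (n - 1)) ^ (n - 1) = toRng n X := by
  rw [aux_xinv _ (by omega), show n - (n - 1) = 1 by omega, pow_one]

lemma aux_conjT_S {n : ℕ} (hn : 0 < n) (p : Polynomial F4) :
    toRng n (conjT n p) = auxS n p := by
  have h1 : auxS n p = auxS n (p % (X ^ n - 1)) := by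
    rw [← sub_eq_zero, ← map_sub]
    apply auxS_dvd
    refine ⟨(p / (X ^ n - 1)), ?_⟩
    have := EuclideanDomain.mod_add_div p (X ^ n - 1)
    linear_combination -this
  rw [aux_conjT hn, h1, aux_sum hn, map_sum, map_sum]
  refine Finset.sum_congr rfl fun i _ => ?_
  rw [map_mul, map_mul, auxS_C, map_pow (toRng n) X, map_pow (auxS n) X, auxS_X, aux_xinv _ i.2.le]

/-- conjugation on the quotient -/
def auxSig (n : ℕ) : Rng n →+* Rng n :=
  Ideal.Quotient.lift _ (auxS n) (fun a ha => auxS_dvd n a (Ideal.mem_span_singleton.1 ha))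

lemma auxSig_mk (n : ℕ) (p : Polynomial F4) : auxSig n (toRng n p) = auxS n p := rfl

lemma auxSig_S {n : ℕ} (hn : 0 < n) (p : Polynomial F4) : auxSig n (auxS n p) = toRng n p := by
  have : (auxSig n).comp (auxS n) = toRng n := by
    apply Polynomial.ringHom_ext
    · intro a
      rw [RingHom.comp_apply, auxS_C, auxSig_mk, auxS_C, ← pow_mul, aux_pow4]
    · rw [RingHom.comp_apply, auxS_X, map_pow, auxSig_mk, auxS_X, aux_xinv2 hn]
  exact RingHom.congr_fun this p

lemma auxS_conjT {n : ℕ} (hn : 0 < n) (p : Polynomial F4) :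
    auxS n (conjT n p) = toRng n p := by
  rw [← auxSig_mk, aux_conjT_S hn, auxSig_S hn]

lemma auxS_dualGen {n : ℕ} (hn : 0 < n) (g : Polynomial F4) :
    ∃ u, auxS n (dualGen n g) = u * toRng n ((X ^ n - 1) / g) := by
  set h := (X ^ n - 1) / g with hh
  refine ⟨(toRng n X ^ (n - 1)) ^ h.natDegree, ?_⟩
  have e : toRng n h = ∑ j ∈ Finset.range (h.natDegree + 1),
      toRng n (C (h.coeff j)) * toRng n X ^ j := by
    conv_lhs => rw [h.as_sum_range_C_mul_X_pow]
    rw [map_sum]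
    exact Finset.sum_congr rfl fun j _ => by rw [map_mul, map_pow]
  rw [e, dualGen, ← hh, map_sum, Finset.mul_sum]
  refine Finset.sum_congr rfl fun j hj => ?_
  have hj' : j ≤ h.natDegree := Nat.lt_succ_iff.1 (Finset.mem_range.1 hj)
  rw [map_mul, auxS_C, map_pow (auxS n) X, auxS_X, ← pow_mul (h.coeff j), aux_pow4]
  have e1 : (toRng n X ^ (n - 1)) ^ h.natDegree =
      (toRng n X ^ (n - 1)) ^ (h.natDegree - j) * (toRng n X ^ (n - 1)) ^ j := by
    rw [← pow_add, Nat.sub_add_cancel hj']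
  have e2 : (toRng n X ^ (n - 1)) ^ j * toRng n X ^ j = 1 := by
    rw [← mul_pow, ← pow_succ, Nat.sub_add_cancel hn, aux_toRng_X, one_pow]
  rw [e1]
  linear_combination (-toRng n (C (h.coeff j)) * (toRng n X ^ (n - 1)) ^ (h.natDegree - j)) * e2

lemma aux_key {n : ℕ} (hn : 0 < n) (g p : Polynomial F4) (hg : g ∣ X ^ n - 1)
    (h : g ∣ p % (X ^ n - 1)) : toRng n p * auxS n (dualGen n g) = 0 := by
  obtain ⟨u, hu⟩ := auxS_dualGen hn g
  obtain ⟨r, hr⟩ := h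
  have h0 : toRng n (g * ((X ^ n - 1) / g)) = 0 := by
    rw [EuclideanDomain.mul_div_cancel' _ hg, aux_toRng_eq_zero]
    rintro rfl
    exact (aux_monic hn).ne_zero (zero_dvd_iff.1 hg)
  rw [hu, ← aux_toRng_mod, hr, map_mul]
  rw [map_mul] at h0
  linear_combination (toRng n r * u) * h0

lemma aux_symm {n : ℕ} (u v : (Fin n → F4) × (Fin n → F4)) (h : hermInner2 u v = 0) :
    hermInner2 v u = 0 := by
  have e : ∀ a b : Fin n → F4, hermInner b a = (hermInner a b) ^ 2 := by
    intro a b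
    rw [hermInner, hermInner, ← frobenius_def 2, map_sum]
    refine Finset.sum_congr rfl fun i _ => ?_
    rw [frobenius_def, mul_pow, ← pow_mul, aux_pow4, mul_comm]
  rw [hermInner2, e u.1, e u.2, ← add_pow_char _ _ 2]
  rw [hermInner2] at h
  rw [h]; simp

lemma hermInner2_zero_of_span {n : ℕ} (S : Set ((Fin n → F4) × (Fin n → F4)))
    (h : ∀ u ∈ S, ∀ v ∈ S, hermInner2 u v = 0) :
    Submodule.span F4 S ≤ hermDualPair (Submodule.span F4 S) := by
  have h1 : ∀ u ∈ S, ∀ v ∈ Submodule.span F4 S, hermInner2 u v = 0 := by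
    intro u hu v hv
    induction hv using Submodule.span_induction with
    | mem x hx => exact h u hu x hx
    | zero => simp [hermInner2, hermInner]
    | add x y _ _ hx hy => rw [hermInner2_add_right, hx, hy, add_zero]
    | smul a x _ hx => rw [hermInner2_smul_right, hx, mul_zero]
  intro v hv u hu
  apply aux_symm
  induction hu using Submodule.span_induction with
  | mem x hx => exact aux_symm _ _ (h1 x hx v hv)
  | zero => simp [hermInner2, hermInner]
  | add x y _ _ hx hy => rw [hermInner2_add_right, hx, hy, add_zero]
  | smul a x _ hx => rw [hermInner2_smul_right, hx, mul_zero]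

/-- Theorem 2: under the stated divisibility conditions, the dual quasi-cyclic code `D`
is Hermitian self-orthogonal: `D ⊆ D^{⊥h}`. -/
theorem D_herm_self_orthogonal (n : ℕ) (hn : Odd n) (g₁ g₂ ν : Polynomial F4)
    (hg₁m : g₁.Monic) (hg₁d : g₁ ∣ X ^ n - 1)
    (hg₂m : g₂.Monic) (hg₂d : g₂ ∣ X ^ n - 1)
    (h1 : g₁ ∣ dualGen n g₁)
    (h2 : g₂ ∣ dualGen n g₂)
    (h3 : g₂ ∣ ((ν + conjT n ν) * dualGen n g₁) % (X ^ n - 1))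
    (h4 : g₁ ∣ ((ν * conjT n ν + 1) * dualGen n g₁) % (X ^ n - 1))
    (h5 : g₂ ∣ ((ν * conjT n ν + 1) * dualGen n g₂) % (X ^ n - 1)) :
    Dqc n g₁ g₂ ν ≤ hermDualPair (Dqc n g₁ g₂ ν) := by
  have hn0 : 0 < n := hn.pos
  have k3 := aux_key hn0 _ _ hg₂d h3
  have k4 := aux_key hn0 _ _ hg₁d h4
  have k5 := aux_key hn0 _ _ hg₂d h5
  simp only [map_mul, map_add, map_one] at k3 k4 k5
  have cross : ∀ c s : Polynomial F4, hermInner2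
      (coeffVec n (-(conjT n ν) * c * dualGen n g₁), coeffVec n (c * dualGen n g₁))
      (coeffVec n (s * dualGen n g₂), coeffVec n (-(conjT n ν) * s * dualGen n g₂)) = 0 := by
    intro c s
    apply aux_herm2 hn0
    simp only [aux_conjT_S hn0, map_mul, map_neg, auxS_conjT hn0] at k3 ⊢
    linear_combination (-toRng n c * auxS n s) * k3
  apply hermInner2_zero_of_span
  rintro u (⟨c, rfl⟩ | ⟨s, rfl⟩) v (⟨c', rfl⟩ | ⟨s', rfl⟩)
  · apply aux_herm2 hn0
    simp only [aux_conjT_S hn0, map_mul, map_neg, auxS_conjT hn0] at k4 ⊢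
    linear_combination (toRng n c * auxS n c') * k4
  · exact cross c s'
  · exact aux_symm _ _ (cross c' s)
  · apply aux_herm2 hn0
    simp only [aux_conjT_S hn0, map_mul, map_neg, auxS_conjT hn0] at k5 ⊢
    linear_combination (toRng n s * auxS n s') * k5

end
end
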